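/- For every λ > 0 there exists a unique C³ function r : T → ℝ satisfying the kernel equation r_{xxx} + r_{yyy} + r_x + r_y = −λr on T together with the boundary conditions r(x,x) = 0 and r_x(x,x) = (λ/3)x for all x ∈ [0,1], and r(0,y) = 0 for all y ∈ [0,1]. -/

import Mathlib

open MeasureTheory

noncomputable section

/-- The closed triangle `T = {(x, y) : 0 ≤ x ≤ y ≤ 1}`. -/
def T : Set (ℝ × ℝ) := {q : ℝ × ℝ | 0 ≤ q.1 ∧ q.1 ≤ q.2 ∧ q.2 ≤ 1}

/-- Partial derivative in the first variable. -/
def pdx (f : ℝ → ℝ → ℝ) (x y : ℝ) : ℝ := deriv (fun x' => f x' y) x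

/-- Partial derivative in the second variable. -/
def pdy (f : ℝ → ℝ → ℝ) (x y : ℝ) : ℝ := deriv (fun y' => f x y') y

/-- The inverse observer kernel for `lam`: a C³ function with
`r_xxx + r_yyy + r_x + r_y = -lam r` on `T`, `r(x,x)=0`, `r_x(x,x) = (lam/3)x`,
`r(0,y)=0`. -/
def IsInverseObserverKernel (lam : ℝ) (r : ℝ → ℝ → ℝ) : Prop :=
  ContDiff ℝ 3 (Function.uncurry r) ∧
  (∀ x y : ℝ, (x, y) ∈ T →
    pdx (pdx (pdx r)) x y + pdy (pdy (pdy r)) x y + pdx r x y + pdy r x y = -lam * r x y) ∧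
  (∀ x ∈ Set.Icc (0:ℝ) 1, r x x = 0) ∧
  (∀ x ∈ Set.Icc (0:ℝ) 1, pdx r x x = lam / 3 * x) ∧
  (∀ y ∈ Set.Icc (0:ℝ) 1, r 0 y = 0)

/-!
In the characteristic coordinates `s = x + y`, `t = y - x` the kernel equation becomes
`6 ∂ₜ²∂ₛ g + 2 ∂ₛ³ g + 2 ∂ₛ g + λ g = 0`. With `c = λ / 2` and `j` the inverse of `∂ₜ`, its symbol
as a polynomial in `X = ∂ₛ` is `3 X + j² (X³ + X + c)`, which for small `j` has one small root `A`.

Uniqueness: the difference `g` of two kernels has zero Cauchy data at `t = 0`, so `j` may be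
realized as a Volterra operator `J`. The two remaining factors of the symbol are of
Cauchy-Riemann type, hence injective by unique continuation, so `∂ₛ g = A(J) g`. As `A(J)` is
small, this and the vanishing of `g` on `s = t` force `g = 0`.

Existence: let `j` be a complex variable `z` on a small circle. Then `exp (x Q + y P)` with
`Q = A(z) - 1 / z` and `P = A(z) + 1 / z` solves the equation for each `z`, and so does the real
part of `-(2πi)⁻¹ ∮ P' exp (x Q + y P) dz`. The integrand is exact for `x = 0`, and for `x = y` the
exponent is holomorphic at `z = 0`, so that the boundary values are residues of low order.
-/

open Set Filter Topology

section CubicSymbol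

open Metric

lemma exists_eq_of_lipschitzOnWith_closedBall {X : Type*} [NormedAddCommGroup X] [CompleteSpace X]
    {ρ : ℝ} {K : NNReal} {f : X → X} (hK : K < 1) (hlip : LipschitzOnWith K f (closedBall 0 ρ))
    (h0 : ‖f 0‖ ≤ (1 - K) * ρ) : ∃ x, ‖x‖ ≤ ρ ∧ f x = x := by
  have hK' : 0 < 1 - (K : ℝ) := sub_pos.2 (by exact_mod_cast hK)
  have hρ : (0 : X) ∈ closedBall 0 ρ :=
    mem_closedBall_self (nonneg_of_mul_nonneg_right ((norm_nonneg _).trans h0) hK')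
  have hmaps : MapsTo f (closedBall 0 ρ) (closedBall 0 ρ) := by
    intro x hx
    have hdist := hlip.dist_le_mul x hx 0 hρ
    rw [dist_eq_norm, dist_zero_right] at hdist
    rw [mem_closedBall_zero_iff] at hx ⊢
    calc ‖f x‖ ≤ ‖f x - f 0‖ + ‖f 0‖ := norm_le_norm_sub_add _ _
      _ ≤ K * ρ + (1 - K) * ρ := add_le_add (hdist.trans (by gcongr)) h0
      _ = ρ := by ring
  obtain ⟨x, hx, hfx, -⟩ := ContractingWith.exists_fixedPoint' (f := f)
    isClosed_closedBall.isComplete hmaps ⟨hK, hlip.mapsToRestrict hmaps⟩ hρ (edist_ne_top _ _)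
  exact ⟨x, mem_closedBall_zero_iff.1 hx, hfx⟩

variable {R : Type*} [NormedCommRing R] [NormedAlgebra ℂ R] [CompleteSpace R]

lemma exists_small_root {j : R} {c : ℂ} (hj : ‖j‖ ≤ 1 / 2) (hjc : ‖j‖ * ‖c‖ ≤ 1 / 4) :
    ∃ A : R, ‖A‖ ≤ 1 / 4 ∧ 3 * A + j ^ 2 * (A ^ 3 + A + algebraMap ℂ R c) = 0 := by
  have hj2 : ‖j ^ 2‖ ≤ 1 / 4 := (norm_pow_le' j two_pos).trans (by nlinarith [norm_nonneg j])
  let f (X : R) : R := -((3⁻¹ : ℂ) • (j ^ 2 * (X ^ 3 + X + algebraMap ℂ R c)))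
  have hlip : LipschitzOnWith 2⁻¹ f (closedBall 0 (1 / 4)) := by
    refine LipschitzOnWith.of_dist_le_mul fun X hX Y hY => ?_
    rw [mem_closedBall_zero_iff] at hX hY
    have hfXY : f X - f Y =
        -((3⁻¹ : ℂ) • (j ^ 2 * ((X * X + X * Y + Y * Y) * (X - Y) + (X - Y)))) := by
      simp only [f]
      algebra
    rw [dist_eq_norm, dist_eq_norm, hfXY, norm_neg, norm_smul]
    calc ‖(3⁻¹ : ℂ)‖ * ‖j ^ 2 * ((X * X + X * Y + Y * Y) * (X - Y) + (X - Y))‖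
        ≤ 1 / 3 * (1 / 4 * ((1 / 4 * (1 / 4) + 1 / 4 * (1 / 4) + 1 / 4 * (1 / 4)) * ‖X - Y‖
            + ‖X - Y‖)) := by
          gcongr
          · norm_num
          · exact norm_mul_le_of_le hj2 (norm_add_le_of_le (norm_mul_le_of_le (norm_add_le_of_le
              (norm_add_le_of_le (norm_mul_le_of_le hX hX) (norm_mul_le_of_le hX hY))
              (norm_mul_le_of_le hY hY)) le_rfl) le_rfl)
      _ ≤ ((2⁻¹ : NNReal) : ℝ) * ‖X - Y‖ := by
          push_cast
          linarith [norm_nonneg (X - Y)]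
  have h0 : ‖f 0‖ ≤ 1 / 3 * (1 / 2 * (1 / 4)) := by
    have : f 0 = -((3⁻¹ : ℂ) • (j * (c • j))) := by simp only [f]; algebra
    rw [this, norm_neg, norm_smul]
    gcongr
    · norm_num
    · exact norm_mul_le_of_le hj ((norm_smul c j).trans_le ((mul_comm _ _).trans_le hjc))
  obtain ⟨A, hA, hfA⟩ := exists_eq_of_lipschitzOnWith_closedBall (by
    rw [← NNReal.coe_lt_coe]; norm_num) hlip (h0.trans (by norm_num))
  refine ⟨A, hA, ?_⟩
  linear_combination (norm := skip) (-3 : ℂ) • hfA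
  simp only [f]
  algebra

lemma exists_two_mul_add_mul_sq_eq {j d : R} (hj : ‖j‖ ≤ 1 / 2) (hd : ‖d‖ ≤ 1 / 2) :
    ∃ b : R, 2 * b + j * b ^ 2 = d := by
  let f (X : R) : R := (2⁻¹ : ℂ) • (d - j * X ^ 2)
  have hlip : LipschitzOnWith 2⁻¹ f (closedBall 0 (1 / 2)) := by
    refine LipschitzOnWith.of_dist_le_mul fun X hX Y hY => ?_
    rw [mem_closedBall_zero_iff] at hX hY
    have hfXY : f X - f Y = -((2⁻¹ : ℂ) • (j * ((X + Y) * (X - Y)))) := by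
      simp only [f]
      algebra
    rw [dist_eq_norm, dist_eq_norm, hfXY, norm_neg, norm_smul]
    calc ‖(2⁻¹ : ℂ)‖ * ‖j * ((X + Y) * (X - Y))‖
        ≤ 1 / 2 * (1 / 2 * ((1 / 2 + 1 / 2) * ‖X - Y‖)) := by
          gcongr
          · norm_num
          · exact norm_mul_le_of_le hj (norm_mul_le_of_le (norm_add_le_of_le hX hY) le_rfl)
      _ ≤ ((2⁻¹ : NNReal) : ℝ) * ‖X - Y‖ := by
          push_cast
          linarith [norm_nonneg (X - Y)]
  have h0 : ‖f 0‖ ≤ 1 / 2 * (1 / 2) := by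
    have : f 0 = (2⁻¹ : ℂ) • d := by simp only [f]; algebra
    rw [this, norm_smul]
    gcongr
    norm_num
  obtain ⟨b, -, hfb⟩ := exists_eq_of_lipschitzOnWith_closedBall (by
    rw [← NNReal.coe_lt_coe]; norm_num) hlip (h0.trans (by norm_num))
  refine ⟨b, ?_⟩
  linear_combination (norm := skip) (-2 : ℂ) • hfb
  simp only [f]
  algebra

-- The complementary quadratic `Y² + jAY + 3 + j² + j²A²`, `Y = jX`, has discriminant
-- `-12 (1 + j² / 3 + j² A² / 4)`, and `1 + j b` is the square root of the last factor.
lemma exists_cubic_factorization {j : R} {c σ : ℂ} (hσ : σ ^ 2 = -3) (hj : ‖j‖ ≤ 1 / 2)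
    (hjc : ‖j‖ * ‖c‖ ≤ 1 / 4) :
    ∃ A β₁ β₂ Y₁ Y₂ : R, ‖A‖ ≤ 1 / 4 ∧
      Y₁ = algebraMap ℂ R σ + j * β₁ ∧ Y₂ = -algebraMap ℂ R σ + j * β₂ ∧
      Y₁ + Y₂ = -(j * A) ∧ Y₁ * Y₂ = 3 + j ^ 2 + j ^ 2 * A ^ 2 ∧
      A * (Y₁ * Y₂) = -(j ^ 2 * algebraMap ℂ R c) := by
  obtain ⟨A, hA, hroot⟩ := exists_small_root hj hjc
  have hd : ‖(3⁻¹ : ℂ) • j + (4⁻¹ : ℂ) • (j * (A * A))‖ ≤ 1 / 2 := by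
    calc _ ≤ ‖(3⁻¹ : ℂ)‖ * (1 / 2) + ‖(4⁻¹ : ℂ)‖ * (1 / 2 * (1 / 4 * (1 / 4))) := by
          refine norm_add_le_of_le ?_ ?_
          all_goals rw [norm_smul]; gcongr
          exact norm_mul_le_of_le hj (norm_mul_le_of_le hA hA)
      _ ≤ 1 / 2 := by norm_num
  obtain ⟨b, hb⟩ := exists_two_mul_add_mul_sq_eq hj hd
  have hσR : algebraMap ℂ R σ ^ 2 = -3 := by rw [← map_pow, hσ, map_neg, map_ofNat]
  generalize algebraMap ℂ R σ = s at *
  have hprod : (s + j * (s * b - (2⁻¹ : ℂ) • A)) * (-s + j * (-(s * b) - (2⁻¹ : ℂ) • A)) =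
      3 + j ^ 2 + j ^ 2 * A ^ 2 := by
    linear_combination (norm := algebra) -(1 + j * b) ^ 2 * hσR + 3 * j * hb
  refine ⟨A, _, _, _, _, hA, rfl, rfl, by algebra, hprod, ?_⟩
  rw [hprod]
  linear_combination hroot

end CubicSymbol

section CauchyUniqueness

lemma hasDerivAt_of_partial_eq_I_mul {u g : ℝ → ℝ → ℂ} {z : ℂ}
    (hx : ∀ᶠ p : ℝ × ℝ in 𝓝 (z.re, z.im), HasDerivAt (fun x => u x p.2) (g p.1 p.2) p.1)
    (hy : ∀ᶠ p : ℝ × ℝ in 𝓝 (z.re, z.im),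
      HasDerivAt (fun y => u p.1 y) (Complex.I * g p.1 p.2) p.2)
    (hg : ContinuousAt (Function.uncurry g) (z.re, z.im)) :
    HasDerivAt (fun w : ℂ => u w.re w.im) (g z.re z.im) z := by
  have hspan : Continuous fun c : ℂ => ContinuousLinearMap.toSpanSingleton ℝ c :=
    (ContinuousLinearMap.toSpanSingletonCLE (𝕜 := ℝ) (E := ℂ)).continuous
  have hreal := (hasStrictFDerivAt_uncurry_coprod (f := u)
    (f₁ := fun x y => ContinuousLinearMap.toSpanSingleton ℝ (g x y))
    (f₂ := fun x y => ContinuousLinearMap.toSpanSingleton ℝ (Complex.I * g x y))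
    hx hy (hspan.continuousAt.comp hg)
    (hspan.continuousAt.comp (continuousAt_const.mul hg))).hasFDerivAt
  have hcomp := hreal.comp z
    (Complex.reCLM.hasFDerivAt.prodMk Complex.imCLM.hasFDerivAt)
  refine hasFDerivAt_of_restrictScalars ℝ hcomp ?_
  ext w
  change w * g z.re z.im = w.re • g z.re z.im + w.im • (Complex.I * g z.re z.im)
  conv_lhs => rw [← Complex.re_add_im w]
  simp only [Complex.real_smul]
  ring

/-- Unique continuation for Cauchy-Riemann equations: the operator `J` is regarded as the inverse
of a derivation `∂`, so that `J w' = iμ w` stands for `w' = iμ ∂ w` with zero Cauchy data, and the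
only solution is required to be zero. -/
def IsCauchyUnique {E : Type*} [NormedAddCommGroup E] [NormedSpace ℂ E] (J : E →L[ℂ] E) : Prop :=
  ∀ ⦃μ : ℝ⦄, μ ≠ 0 → ∀ ⦃α β : ℝ⦄ ⦃w w' : ℝ → E⦄, (∀ s ∈ Ioo α β, HasDerivAt w (w' s) s) →
    (∀ s ∈ Ioo α β, J (w' s) = (Complex.I * μ) • w s) → ∀ s ∈ Ioo α β, w s = 0

namespace IsCauchyUnique

variable {E : Type*} [NormedAddCommGroup E] [NormedSpace ℂ E] {J : E →L[ℂ] E}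

lemma smul (hJ : IsCauchyUnique J) {h : ℝ} (hh : h ≠ 0) : IsCauchyUnique ((h : ℂ) • J) := by
  intro μ hμ α β w w' hw heq
  refine hJ (div_ne_zero hμ hh) hw fun s hs => ?_
  have hh' : (h : ℂ) ≠ 0 := by exact_mod_cast hh
  have := heq s hs
  rw [smul_apply, ← eq_inv_smul_iff₀ hh'] at this
  rw [this, smul_smul]
  push_cast
  ring_nf

lemma of_semiconj {F : Type*} [NormedAddCommGroup F] [NormedSpace ℂ F] {K : F →L[ℂ] F}
    (hJ : IsCauchyUnique J) {N : F →L[ℂ] E} (hN : Function.Injective N)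
    (h : ∀ f, N (K f) = J (N f)) : IsCauchyUnique K := by
  intro μ hμ α β w w' hw heq s hs
  refine (map_eq_zero_iff N hN).1 (hJ hμ (w := fun s => N (w s)) (w' := fun s => N (w' s))
    (fun s hs => ?_) (fun s hs => ?_) s hs)
  · exact (N.restrictScalars ℝ).hasFDerivAt.comp_hasDerivAt s (hw s hs)
  · rw [← h, heq s hs, map_smul]

open NormedSpace in
lemma eq_zero_of_commute [CompleteSpace E] (hJ : IsCauchyUnique J) {B : E →L[ℂ] E}
    (hB : Commute B J) {μ α β : ℝ} (hμ : μ ≠ 0) {w w' : ℝ → E}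
    (hw : ∀ s ∈ Ioo α β, HasDerivAt w (w' s) s)
    (heq : ∀ s ∈ Ioo α β, J (w' s) = (Complex.I * μ) • w s + J (B (w s))) :
    ∀ s ∈ Ioo α β, w s = 0 := by
  let _ : NormedAlgebra ℚ (E →L[ℂ] E) := .restrictScalars ℚ ℂ _
  -- the integrating factor `exp (-s B)` removes the zeroth order term
  let e (s : ℝ) : E →L[ℂ] E := exp (s • -B)
  have he (s : ℝ) : HasDerivAt (fun u => (e u).restrictScalars ℝ)
      ((e s * -B).restrictScalars ℝ) s :=
    (ContinuousLinearMap.restrictScalarsL ℂ E E ℝ ℝ).hasFDerivAt.comp_hasDerivAt s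
      (hasDerivAt_exp_smul_const (-B) s)
  have hcomm (s : ℝ) (f : E) : J (e s f) = e s (J f) :=
    (DFunLike.congr_fun (hB.neg_left.smul_left s).exp_left.eq f).symm
  have hew : ∀ s ∈ Ioo α β, HasDerivAt (fun s => e s (w s)) (e s (w' s - B (w s))) s := by
    intro s hs
    refine ((he s).clm_apply (hw s hs)).congr_deriv ?_
    simp [sub_eq_neg_add]
  have hzero := hJ hμ hew fun s hs => by
    rw [hcomm, map_sub, heq s hs, add_sub_cancel_right, map_smul]
  intro s hs
  have hinv : exp (-(s • -B)) * e s = 1 :=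
    (exp_add_of_commute (Commute.refl (s • -B)).neg_left).symm.trans (by simp)
  calc w s = exp (-(s • -B)) (e s (w s)) := (DFunLike.congr_fun hinv (w s)).symm
    _ = 0 := by rw [hzero s hs, map_zero]

end IsCauchyUnique

-- Factoring the symbol `3X + j² (X³ + X + c)` as `(X - A) (jX - Y₁) (jX - Y₂)`, the two factors
-- `j ∂ - Y` are of Cauchy-Riemann type, hence injective on functions of `s`.
lemma IsCauchyUnique.exists_deriv_eq {E : Type*} [NormedAddCommGroup E] [NormedSpace ℂ E]
    [CompleteSpace E] {J : E →L[ℂ] E} (hJ : IsCauchyUnique J) (hJn : ‖J‖ ≤ 1 / 2) {c : ℂ}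
    (hJc : ‖J‖ * ‖c‖ ≤ 1 / 4) {α β : ℝ} {F₀ F₁ F₂ F₃ : ℝ → E}
    (h₀ : ∀ s, HasDerivAt F₀ (F₁ s) s) (h₁ : ∀ s, HasDerivAt F₁ (F₂ s) s)
    (h₂ : ∀ s, HasDerivAt F₂ (F₃ s) s)
    (heq : ∀ s ∈ Ioo α β, (3 : ℂ) • F₁ s + J (J (F₃ s + F₁ s + c • F₀ s)) = 0) :
    ∃ A : E →L[ℂ] E, ‖A‖ ≤ 1 / 4 ∧ ∀ s ∈ Ioo α β, F₁ s = A (F₀ s) := by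
  let R := Algebra.elemental ℂ J
  let _ : NormedCommRing R := { SubringClass.toNormedRing R with mul_comm := mul_comm }
  let j : R := ⟨J, Algebra.elemental.self_mem ℂ _⟩
  have hσ : (Complex.I * (√3 : ℝ)) ^ 2 = -3 := by
    rw [mul_pow, Complex.I_sq, ← Complex.ofReal_pow, Real.sq_sqrt (by norm_num)]
    norm_num
  obtain ⟨A, β₁, β₂, Y₁, Y₂, hA, hY₁, hY₂, hsum, hprod, hAprod⟩ :=
    exists_cubic_factorization (j := j) hσ hJn hJc
  have hJ_smul (f : E) : J f = j • f := rfl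
  have hcoe (X : R) (f : E) : (X : E →L[ℂ] E) f = X • f := rfl
  have halgebraMap (a : ℂ) (f : E) : a • f = algebraMap ℂ R a • f := rfl
  have hderiv (X : R) {f f' : ℝ → E} (hf : ∀ s, HasDerivAt f (f' s) s) (s : ℝ) :
      HasDerivAt (fun s => X • f s) (X • f' s) s :=
    ((X : E →L[ℂ] E).restrictScalars ℝ).hasFDerivAt.comp_hasDerivAt s (hf s)
  have hcommute (X : R) : Commute (X : E →L[ℂ] E) J := congrArg Subtype.val (mul_comm X j)
  have hsqrt : (√3 : ℝ) ≠ 0 := by positivity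
  have hw : ∀ s ∈ Ioo α β, j • (F₂ s - A • F₁ s) - Y₂ • (F₁ s - A • F₀ s) = 0 := by
    refine hJ.eq_zero_of_commute (hcommute β₁) hsqrt
      (fun s _ => (hderiv j (fun s => (h₂ s).sub (hderiv A h₁ s)) s).sub
        (hderiv Y₂ (fun s => (h₁ s).sub (hderiv A h₀ s)) s)) fun s hs => ?_
    have hs := heq s hs
    simp only [hJ_smul, halgebraMap, hcoe, map_ofNat] at hs ⊢
    linear_combination (norm := module) hs - (j * hsum) • F₂ s + (j * A * hsum + hprod) • F₁ s -
      hAprod • F₀ s + (hY₁ • (j • (F₂ s - A • F₁ s) - Y₂ • (F₁ s - A • F₀ s)))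
  have hu : ∀ s ∈ Ioo α β, F₁ s - A • F₀ s = 0 := by
    refine hJ.eq_zero_of_commute (hcommute β₂) (neg_ne_zero.2 hsqrt)
      (fun s _ => (h₁ s).sub (hderiv A h₀ s)) fun s hs => ?_
    simp only [hJ_smul, halgebraMap, hcoe]
    rw [sub_eq_zero.1 (hw s hs), hY₂]
    push_cast [mul_neg, map_neg]
    rw [add_smul, mul_smul]
  exact ⟨A, hA, fun s hs => sub_eq_zero.1 (hu s hs)⟩

end CauchyUniqueness

section Volterra

/-- The Volterra operator `f ↦ ∫₀ᵗ f` on `C([0,1], ℂ)`; the integrand is extended to `ℝ` by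
constants. -/
def volterra : C(unitInterval, ℂ) →L[ℂ] C(unitInterval, ℂ) :=
  have hc (f : C(unitInterval, ℂ)) : Continuous fun x : ℝ => f (projIcc 0 1 zero_le_one x) :=
    f.continuous.comp continuous_projIcc
  LinearMap.mkContinuous
    { toFun := fun f =>
        ⟨fun t => ∫ x in (0 : ℝ)..t, f (projIcc 0 1 zero_le_one x),
          (intervalIntegral.continuous_primitive
            (fun a b => (hc f).intervalIntegrable a b) 0).comp continuous_subtype_val⟩
      map_add' := fun f g => ContinuousMap.ext fun t =>
        intervalIntegral.integral_add ((hc f).intervalIntegrable _ _)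
          ((hc g).intervalIntegrable _ _)
      map_smul' := fun c f => ContinuousMap.ext fun t => intervalIntegral.integral_smul c _ }
    1 fun f => by
      rw [ContinuousMap.norm_le _ (by positivity)]
      intro t
      refine (intervalIntegral.norm_integral_le_of_norm_le_const
        (C := ‖f‖) fun x _ => f.norm_coe_le_norm _).trans ?_
      rw [sub_zero, abs_of_nonneg t.2.1, one_mul]
      exact mul_le_of_le_one_right (norm_nonneg f) t.2.2

lemma volterra_apply (f : C(unitInterval, ℂ)) (t : unitInterval) :
    volterra f t = ∫ x in (0 : ℝ)..t, f (projIcc 0 1 zero_le_one x) := rfl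

lemma volterra_apply_zero (f : C(unitInterval, ℂ)) : volterra f 0 = 0 := by
  simp only [volterra_apply, Icc.coe_zero, intervalIntegral.integral_same]

lemma volterra_apply_projIcc {f : C(unitInterval, ℂ)} (hf : f 0 = 0) {t : ℝ} (ht : t ≤ 1) :
    volterra f (projIcc 0 1 zero_le_one t) = ∫ x in (0 : ℝ)..t, f (projIcc 0 1 zero_le_one x) := by
  rcases le_total 0 t with ht0 | ht0
  · rw [volterra_apply, projIcc_of_mem zero_le_one ⟨ht0, ht⟩]
  · have hzero : EqOn (fun x => f (projIcc 0 1 zero_le_one x)) (fun _ => 0) (uIcc 0 t) := by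
      intro x hx
      rw [uIcc_of_ge ht0] at hx
      change f (projIcc 0 1 zero_le_one x) = 0
      rw [projIcc_of_le_left zero_le_one hx.2]
      exact hf
    rw [projIcc_of_le_left zero_le_one ht0, intervalIntegral.integral_congr hzero,
      intervalIntegral.integral_zero]
    exact volterra_apply_zero f

lemma hasDerivAt_volterra_apply_projIcc {f : C(unitInterval, ℂ)} (hf : f 0 = 0) {t : ℝ}
    (ht : t < 1) :
    HasDerivAt (fun x => volterra f (projIcc 0 1 zero_le_one x))
      (f (projIcc 0 1 zero_le_one t)) t := by
  have hcont : Continuous fun x : ℝ => f (projIcc 0 1 zero_le_one x) :=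
    f.continuous.comp continuous_projIcc
  refine (hcont.integral_hasStrictDerivAt 0 t).hasDerivAt.congr_of_eventuallyEq ?_
  filter_upwards [Iio_mem_nhds ht] with x hx using volterra_apply_projIcc hf (le_of_lt hx)

lemma hasDerivAt_volterra_extension {W W' : ℝ → C(unitInterval, ℂ)} {α β μ : ℝ} (hμ : μ ≠ 0)
    (hW : ∀ s ∈ Ioo α β, HasDerivAt W (W' s) s)
    (h : ∀ s ∈ Ioo α β, volterra (W' s) = (Complex.I * μ) • W s) {z : ℂ}
    (hz : z.re ∈ Ioo α β) (hz1 : -μ * z.im < 1) :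
    HasDerivAt (fun z : ℂ => volterra (W z.re) (projIcc 0 1 zero_le_one (-μ * z.im)))
      (Complex.I * μ * W z.re (projIcc 0 1 zero_le_one (-μ * z.im))) z := by
  have hs : ∀ᶠ p : ℝ × ℝ in 𝓝 (z.re, z.im), p.1 ∈ Ioo α β :=
    continuous_fst.continuousAt.eventually_mem (isOpen_Ioo.mem_nhds hz)
  have ht : ∀ᶠ p : ℝ × ℝ in 𝓝 (z.re, z.im), -μ * p.2 < 1 :=
    (continuous_const.mul continuous_snd).continuousAt.eventually_lt continuousAt_const hz1
  have hzero : ∀ s ∈ Ioo α β, W s 0 = 0 := by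
    intro s hs
    have := (congrArg (· 0) (h s hs)).symm.trans (volterra_apply_zero _)
    simpa [hμ] using this
  refine hasDerivAt_of_partial_eq_I_mul
    (u := fun x y => volterra (W x) (projIcc 0 1 zero_le_one (-μ * y)))
    (g := fun x y => Complex.I * μ * W x (projIcc 0 1 zero_le_one (-μ * y))) ?_ ?_ ?_
  · filter_upwards [hs] with p hp
    have := ((ContinuousMap.evalCLM ℂ (projIcc (0 : ℝ) 1 zero_le_one (-μ * p.2))).comp
      volterra).restrictScalars ℝ |>.hasFDerivAt.comp_hasDerivAt p.1 (hW p.1 hp)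
    refine this.congr_deriv ?_
    exact congrArg (· (projIcc (0 : ℝ) 1 zero_le_one (-μ * p.2))) (h p.1 hp)
  · filter_upwards [hs, ht] with p hp hp'
    refine ((hasDerivAt_volterra_apply_projIcc (hzero p.1 hp) hp').scomp p.2
      ((hasDerivAt_id p.2).const_mul (-μ))).congr_deriv ?_
    rw [Complex.real_smul, ← mul_assoc, ← mul_assoc, Complex.I_mul_I]
    push_cast
    ring
  · have hWc : ContinuousAt (fun p : ℝ × ℝ => W p.1) (z.re, z.im) :=
      ContinuousAt.comp (f := Prod.fst) (x := (z.re, z.im)) (hW _ hz).continuousAt continuousAt_fst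
    have hπ : Continuous fun p : ℝ × ℝ => projIcc (0 : ℝ) 1 zero_le_one (-μ * p.2) :=
      continuous_projIcc.comp (by fun_prop)
    exact continuousAt_const.mul (hWc.eval hπ.continuousAt)

lemma isCauchyUnique_volterra : IsCauchyUnique volterra := by
  intro μ hμ α β W W' hW h s hs
  let U : Set ℂ := Complex.re ⁻¹' Ioo α β ∩ {z | -μ * z.im < 1}
  let g : ℂ → ℂ := fun z => volterra (W z.re) (projIcc 0 1 zero_le_one (-μ * z.im))
  have hUo : IsOpen U := (isOpen_Ioo.preimage Complex.continuous_re).inter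
    (isOpen_lt (continuous_const.mul Complex.continuous_im) continuous_const)
  have hUc : Convex ℝ U :=
    ((convex_Ioo α β).linear_preimage Complex.reLm).inter
      ((convex_Iio (1 : ℝ)).linear_preimage ((-μ) • Complex.imLm))
  have hg : DifferentiableOn ℂ g U := fun z hz =>
    (hasDerivAt_volterra_extension hμ hW h hz.1 hz.2).differentiableAt.differentiableWithinAt
  have him (t : ℝ) : -μ * (-t / μ) = t := by field_simp
  have hmem {t : ℝ} (ht : t < 1) : (⟨s, -t / μ⟩ : ℂ) ∈ U := ⟨hs, (him t).trans_lt ht⟩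
  have hbelow : g =ᶠ[𝓝 (⟨s, -(-1) / μ⟩ : ℂ)] 0 := by
    filter_upwards [(isOpen_lt (continuous_const.mul Complex.continuous_im)
      continuous_const).mem_nhds ((him (-1)).trans_lt neg_one_lt_zero)] with z hz
    change volterra (W z.re) (projIcc 0 1 zero_le_one (-μ * z.im)) = 0
    rw [projIcc_of_le_left zero_le_one (show -μ * z.im ≤ 0 from le_of_lt hz)]
    exact volterra_apply_zero _
  have hgzero : EqOn g 0 U := (hg.analyticOnNhd hUo).eqOn_zero_of_preconnected_of_eventuallyEq_zero
    hUc.isPreconnected (hmem (by norm_num)) hbelow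
  have hzero : EqOn (fun t : ℝ => W s (projIcc 0 1 zero_le_one t)) (fun _ => 0) (Iio 1) := by
    intro t ht
    have hd := hasDerivAt_volterra_extension hμ hW h hs (hmem ht).2
    have := hd.unique ((hasDerivAt_const _ (0 : ℂ)).congr_of_eventuallyEq
      (hgzero.eventuallyEq_of_mem (hUo.mem_nhds (hmem ht))))
    simpa [hμ, him] using this
  have hclosure := hzero.closure ((W s).continuous.comp continuous_projIcc) continuous_const
  rw [closure_Iio] at hclosure
  ext t
  simpa using hclosure (mem_Iic.2 t.2.2)

end Volterra

section DirectionalDerivatives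

variable {E E' F F' : Type*} [NormedAddCommGroup E] [NormedSpace ℝ E] [NormedAddCommGroup E']
  [NormedSpace ℝ E'] [NormedAddCommGroup F] [NormedSpace ℝ F] [NormedAddCommGroup F']
  [NormedSpace ℝ F'] {f g : E → F}

/-- The directional derivative of `f` along `v`, as a function of the base point. -/
def dirDeriv (v : E) (f : E → F) (p : E) : F := fderiv ℝ f p v

lemma contDiff_dirDeriv {m n : WithTop ℕ∞} (hf : ContDiff ℝ n f) (hmn : m + 1 ≤ n) (v : E) :
    ContDiff ℝ m (dirDeriv v f) :=
  (hf.fderiv_right hmn).clm_apply contDiff_const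

lemma hasDerivAt_comp_dirDeriv (hf : Differentiable ℝ f) {γ : ℝ → E} {v : E} {s : ℝ}
    (hγ : HasDerivAt γ v s) : HasDerivAt (fun s => f (γ s)) (dirDeriv v f (γ s)) s :=
  (hf (γ s)).hasFDerivAt.comp_hasDerivAt s hγ

lemma dirDeriv_sub (hf : Differentiable ℝ f) (hg : Differentiable ℝ g) (v : E) :
    dirDeriv v (f - g) = dirDeriv v f - dirDeriv v g := by
  funext p
  simp [dirDeriv, fderiv_sub (hf p) (hg p)]

lemma dirDeriv_add (hf : Differentiable ℝ f) (hg : Differentiable ℝ g) (v : E) :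
    dirDeriv v (f + g) = dirDeriv v f + dirDeriv v g := by
  funext p
  simp [dirDeriv, fderiv_add (hf p) (hg p)]

lemma dirDeriv_comp (hf : Differentiable ℝ f) (ℓ : F →L[ℝ] F') (L : E' →L[ℝ] E) (v : E') :
    dirDeriv v (ℓ ∘ f ∘ L) = ℓ ∘ dirDeriv (L v) f ∘ L := by
  funext p
  exact congrArg (· v) (ℓ.hasFDerivAt.comp p ((hf (L p)).hasFDerivAt.comp p L.hasFDerivAt)).fderiv

lemma dirDeriv_dir_sub (v w : E) : dirDeriv (v - w) f = dirDeriv v f - dirDeriv w f := by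
  funext p
  simp [dirDeriv]

lemma dirDeriv_dir_add (v w : E) : dirDeriv (v + w) f = dirDeriv v f + dirDeriv w f := by
  funext p
  simp [dirDeriv]

lemma dirDeriv_comm (hf : ContDiff ℝ 2 f) (v w : E) :
    dirDeriv v (dirDeriv w f) = dirDeriv w (dirDeriv v f) := by
  funext p
  have hd : DifferentiableAt ℝ (fderiv ℝ f) p :=
    ((hf.fderiv_right (m := 1) (by norm_num)).differentiable (by norm_num)) p
  have h (v w : E) : dirDeriv v (dirDeriv w f) p = fderiv ℝ (fderiv ℝ f) p v w := by
    change fderiv ℝ (fun q => fderiv ℝ f q w) p v = _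
    rw [fderiv_clm_apply hd (by fun_prop)]
    simp
  rw [h, h]
  exact (hf.contDiffAt.isSymmSndFDerivAt (by simp)).eq v w

/-- The differential operator `∂ᵤ³ + ∂ᵥ³ + ∂ᵤ + ∂ᵥ` of the kernel equation, for arbitrary
directions `u`, `v` in place of the coordinate ones. -/
def kernelOperator (u v : E) (f : E → F) : E → F :=
  dirDeriv u (dirDeriv u (dirDeriv u f)) + dirDeriv v (dirDeriv v (dirDeriv v f)) +
    dirDeriv u f + dirDeriv v f

lemma kernelOperator_sub (hf : ContDiff ℝ 3 f) (hg : ContDiff ℝ 3 g) (u v : E) :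
    kernelOperator u v (f - g) = kernelOperator u v f - kernelOperator u v g := by
  have d0 {f : E → F} (hf : ContDiff ℝ 3 f) : Differentiable ℝ f := hf.differentiable (by norm_num)
  have c1 {f : E → F} (hf : ContDiff ℝ 3 f) (v : E) : ContDiff ℝ 2 (dirDeriv v f) :=
    contDiff_dirDeriv hf (by norm_num) v
  have d1 {f : E → F} (hf : ContDiff ℝ 3 f) (v : E) : Differentiable ℝ (dirDeriv v f) :=
    (c1 hf v).differentiable (by norm_num)
  have d2 {f : E → F} (hf : ContDiff ℝ 3 f) (v : E) :
      Differentiable ℝ (dirDeriv v (dirDeriv v f)) :=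
    (contDiff_dirDeriv (c1 hf v) (m := 1) (by norm_num) v).differentiable (by norm_num)
  simp only [kernelOperator, dirDeriv_sub (d0 hf) (d0 hg), dirDeriv_sub (d1 hf _) (d1 hg _),
    dirDeriv_sub (d2 hf _) (d2 hg _)]
  abel

lemma kernelOperator_sub_add (hf : ContDiff ℝ 3 f) (a b : E) :
    kernelOperator (a - b) (a + b) f =
      (6 : ℝ) • dirDeriv b (dirDeriv b (dirDeriv a f)) +
        (2 : ℝ) • (dirDeriv a (dirDeriv a (dirDeriv a f)) + dirDeriv a f) := by
  have c1 (v : E) : ContDiff ℝ 2 (dirDeriv v f) := contDiff_dirDeriv hf (by norm_num) v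
  have d1 (v : E) : Differentiable ℝ (dirDeriv v f) := (c1 v).differentiable (by norm_num)
  have d2 (v w : E) : Differentiable ℝ (dirDeriv v (dirDeriv w f)) :=
    (contDiff_dirDeriv (c1 w) (m := 1) (by norm_num) v).differentiable (by norm_num)
  have hab : dirDeriv a (dirDeriv b f) = dirDeriv b (dirDeriv a f) :=
    dirDeriv_comm (hf.of_le (by norm_num)) a b
  have habb : dirDeriv a (dirDeriv b (dirDeriv b f)) = dirDeriv b (dirDeriv b (dirDeriv a f)) := by
    rw [dirDeriv_comm (c1 b) a b, hab]
  simp only [kernelOperator, dirDeriv_dir_sub, dirDeriv_dir_add, dirDeriv_sub (d1 _) (d1 _),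
    dirDeriv_add (d1 _) (d1 _), dirDeriv_sub (d2 _ _) (d2 _ _),
    dirDeriv_add (d2 _ _) (d2 _ _), dirDeriv_sub ((d2 _ _).sub (d2 _ _)) ((d2 _ _).sub (d2 _ _)),
    dirDeriv_add ((d2 _ _).add (d2 _ _)) ((d2 _ _).add (d2 _ _)), hab, habb]
  module

end DirectionalDerivatives

section PartialDerivatives

open Function (uncurry)

variable {r : ℝ → ℝ → ℝ}

lemma uncurry_pdx (hr : Differentiable ℝ (uncurry r)) :
    uncurry (pdx r) = dirDeriv (1, 0) (uncurry r) := by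
  funext ⟨x, y⟩
  exact (hasDerivAt_comp_dirDeriv hr ((hasDerivAt_id x).prodMk (hasDerivAt_const x y))).deriv

lemma uncurry_pdy (hr : Differentiable ℝ (uncurry r)) :
    uncurry (pdy r) = dirDeriv (0, 1) (uncurry r) := by
  funext ⟨x, y⟩
  exact (hasDerivAt_comp_dirDeriv hr ((hasDerivAt_const y x).prodMk (hasDerivAt_id y))).deriv

lemma pd_cubes_eq_kernelOperator (hr : ContDiff ℝ 3 (uncurry r)) (x y : ℝ) :
    pdx (pdx (pdx r)) x y + pdy (pdy (pdy r)) x y + pdx r x y + pdy r x y =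
      kernelOperator (1, 0) (0, 1) (uncurry r) (x, y) := by
  have d0 : Differentiable ℝ (uncurry r) := hr.differentiable (by norm_num)
  have c1 (v : ℝ × ℝ) := contDiff_dirDeriv hr (m := 2) (by norm_num) v
  have d1 (v : ℝ × ℝ) := (c1 v).differentiable (by norm_num)
  have d2 (v : ℝ × ℝ) :=
    (contDiff_dirDeriv (c1 v) (m := 1) (by norm_num) v).differentiable (by norm_num)
  have hx1 := uncurry_pdx d0
  have hx2 := uncurry_pdx (hx1 ▸ d1 _)
  have hx3 := uncurry_pdx (r := pdx (pdx r)) (by rw [hx2, hx1]; exact d2 _)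
  have hy1 := uncurry_pdy d0
  have hy2 := uncurry_pdy (hy1 ▸ d1 _)
  have hy3 := uncurry_pdy (r := pdy (pdy r)) (by rw [hy2, hy1]; exact d2 _)
  rw [kernelOperator, ← hx1, ← hx2, ← hx3, ← hy1, ← hy2, ← hy3]
  rfl

end PartialDerivatives

section WeightedVolterra

/-- The function `τ ↦ exp (k τ)` on the unit interval. -/
def expWeight (k : ℝ) : C(unitInterval, ℂ) := ⟨fun τ => Complex.exp (k * (τ : ℝ)), by fun_prop⟩

lemma norm_expWeight_apply (k : ℝ) (τ : unitInterval) :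
    ‖expWeight k τ‖ = Real.exp (k * τ) := by
  change ‖Complex.exp (k * (τ : ℝ))‖ = _
  rw [← Complex.ofReal_mul, Complex.norm_exp_ofReal]

lemma expWeight_mul_expWeight_neg (k : ℝ) : expWeight k * expWeight (-k) = 1 := by
  ext τ
  change Complex.exp (k * (τ : ℝ)) * Complex.exp ((-k : ℝ) * (τ : ℝ)) = 1
  rw [← Complex.exp_add, Complex.ofReal_neg, neg_mul, add_neg_cancel, Complex.exp_zero]

lemma isUnit_expWeight (k : ℝ) : IsUnit (expWeight k) :=
  IsUnit.of_mul_eq_one _ (expWeight_mul_expWeight_neg k)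

/-- The conjugate of the Volterra operator by an exponential weight: the operator
`f ↦ ∫₀ᵗ exp (-k (t - x)) f(x) dx`, which has small norm for large `k`. -/
def weightedVolterra (k : ℝ) : C(unitInterval, ℂ) →L[ℂ] C(unitInterval, ℂ) :=
  ContinuousLinearMap.mul ℂ _ (expWeight (-k)) ∘L volterra ∘L
    ContinuousLinearMap.mul ℂ _ (expWeight k)

lemma weightedVolterra_apply (k : ℝ) (f : C(unitInterval, ℂ)) :
    weightedVolterra k f = expWeight (-k) * volterra (expWeight k * f) := rfl

lemma weightedVolterra_expWeight_neg_mul (k : ℝ) (f : C(unitInterval, ℂ)) :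
    weightedVolterra k (expWeight (-k) * f) = expWeight (-k) * volterra f := by
  rw [weightedVolterra_apply, ← mul_assoc (expWeight k), expWeight_mul_expWeight_neg, one_mul]

lemma isCauchyUnique_weightedVolterra (k : ℝ) : IsCauchyUnique (weightedVolterra k) := by
  refine isCauchyUnique_volterra.of_semiconj
    (N := ContinuousLinearMap.mul ℂ C(unitInterval, ℂ) (expWeight k)) (fun f g hfg => ?_)
    fun f => ?_
  · exact (isUnit_expWeight k).mul_right_injective hfg
  · rw [ContinuousLinearMap.mul_apply', ContinuousLinearMap.mul_apply', weightedVolterra_apply,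
      ← mul_assoc, expWeight_mul_expWeight_neg, one_mul]

lemma norm_weightedVolterra_le {k : ℝ} (hk : 0 < k) : ‖weightedVolterra k‖ ≤ 1 / k := by
  refine ContinuousLinearMap.opNorm_le_bound _ (by positivity) fun f => ?_
  rw [ContinuousMap.norm_le _ (by positivity)]
  intro τ
  have hexp : ∫ x in (0 : ℝ)..τ, Real.exp (k * x) * ‖f‖ = (Real.exp (k * τ) - 1) / k * ‖f‖ := by
    rw [intervalIntegral.integral_mul_const, intervalIntegral.integral_comp_mul_left _ hk.ne',
      integral_exp]
    simp only [mul_zero, Real.exp_zero, smul_eq_mul]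
    ring
  have hbound : ‖volterra (expWeight k * f) τ‖ ≤ (Real.exp (k * τ) - 1) / k * ‖f‖ := by
    rw [volterra_apply, ← hexp]
    refine intervalIntegral.norm_integral_le_of_norm_le τ.2.1 (ae_of_all _ fun x hx => ?_)
      ((by fun_prop : Continuous fun x => Real.exp (k * x) * ‖f‖).intervalIntegrable _ _)
    rw [projIcc_of_mem zero_le_one ⟨hx.1.le, hx.2.trans τ.2.2⟩, ContinuousMap.mul_apply, norm_mul,
      norm_expWeight_apply]
    gcongr
    exact f.norm_coe_le_norm _
  calc ‖weightedVolterra k f τ‖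
      = Real.exp (-k * τ) * ‖volterra (expWeight k * f) τ‖ := by
        rw [weightedVolterra_apply, ContinuousMap.mul_apply, norm_mul, norm_expWeight_apply]
    _ ≤ Real.exp (-k * τ) * (Real.exp (k * τ) / k * ‖f‖) := by
        gcongr
        refine hbound.trans ?_
        gcongr
        linarith
    _ = 1 / k * ‖f‖ := by
        rw [neg_mul, Real.exp_neg]
        field_simp

end WeightedVolterra

section Slices

lemma hasDerivAt_curry {K F : Type*} [TopologicalSpace K] [CompactSpace K] [NormedAddCommGroup F]
    [NormedSpace ℝ F] [CompleteSpace F] {f f' : C(ℝ × K, F)}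
    (hf : ∀ s τ, HasDerivAt (fun s => f (s, τ)) (f' (s, τ)) s) (s : ℝ) :
    HasDerivAt f.curry (f'.curry s) s := by
  have hc := f'.curry.continuous
  have heq : ⇑f.curry = fun s => f.curry 0 + ∫ u in (0 : ℝ)..s, f'.curry u := by
    funext u
    ext τ
    have hcτ : Continuous fun v => f' (v, τ) := by fun_prop
    have hint : (∫ v in (0 : ℝ)..u, f'.curry v) τ = ∫ v in (0 : ℝ)..u, f' (v, τ) :=
      ((ContinuousMap.evalCLM ℝ τ).intervalIntegral_comp_comm
        (hc.intervalIntegrable (μ := volume) 0 u)).symm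
    rw [ContinuousMap.add_apply, hint, intervalIntegral.integral_eq_sub_of_hasDerivAt
      (fun v _ => hf v τ) (hcτ.intervalIntegrable _ _)]
    exact (add_sub_cancel _ _).symm
  rw [heq]
  exact (hc.integral_hasStrictDerivAt 0 s).hasDerivAt.const_add _

/-- The functions `τ ↦ f (s, h τ)` on the unit interval, depending continuously on `s`. -/
def slice (h : ℝ) (f : C(ℝ × ℝ, ℂ)) : C(ℝ, C(unitInterval, ℂ)) :=
  (f.comp ⟨fun p : ℝ × unitInterval => (p.1, h * p.2), by fun_prop⟩).curry

lemma slice_apply (h : ℝ) (f : C(ℝ × ℝ, ℂ)) (s : ℝ) (τ : unitInterval) :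
    slice h f s τ = f (s, h * τ) := rfl

lemma smul_volterra_slice {f f' : C(ℝ × ℝ, ℂ)} {s : ℝ}
    (hf : ∀ t, HasDerivAt (fun t => f (s, t)) (f' (s, t)) t) (h0 : f (s, 0) = 0) (h : ℝ) :
    (h : ℂ) • volterra (slice h f' s) = slice h f s := by
  ext τ
  have hderiv (x : ℝ) : HasDerivAt (fun x : ℝ => f (s, h * x)) (h • f' (s, h * x)) x :=
    (hf (h * x)).scomp x (by simpa using (hasDerivAt_id x).const_mul h)
  have hcont : Continuous fun x : ℝ => h • f' (s, h * x) := by fun_prop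
  calc (h : ℂ) • volterra (slice h f' s) τ = ∫ x in (0 : ℝ)..τ, h • f' (s, h * x) := by
        rw [volterra_apply, ← intervalIntegral.integral_smul]
        refine intervalIntegral.integral_congr fun x hx => ?_
        rw [uIcc_of_le τ.2.1] at hx
        simp only [slice_apply, projIcc_of_mem zero_le_one ⟨hx.1, hx.2.trans τ.2.2⟩,
          Complex.real_smul, smul_eq_mul]
    _ = slice h f s τ := by
        rw [intervalIntegral.integral_eq_sub_of_hasDerivAt (fun x _ => hderiv x)
          (hcont.intervalIntegrable _ _), mul_zero, h0, sub_zero, slice_apply]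

/-- The slice at `s` of the function `(s, t) ↦ exp (-k t) f (s, t)` on the strip `0 ≤ t ≤ h`,
rescaled to the unit interval. -/
def weightedSlice (k h : ℝ) (f : C(ℝ × ℝ, ℂ)) (s : ℝ) : C(unitInterval, ℂ) :=
  expWeight (-(k * h)) * slice h f s

lemma norm_weightedSlice_apply (k h : ℝ) (f : C(ℝ × ℝ, ℂ)) (s : ℝ) (τ : unitInterval) :
    ‖weightedSlice k h f s τ‖ = Real.exp (-(k * (h * τ))) * ‖f (s, h * τ)‖ := by
  rw [weightedSlice, ContinuousMap.mul_apply, norm_mul, norm_expWeight_apply, slice_apply, neg_mul,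
    mul_assoc]

lemma hasDerivAt_weightedSlice {f f' : C(ℝ × ℝ, ℂ)}
    (hf : ∀ s t, HasDerivAt (fun s => f (s, t)) (f' (s, t)) s) (k h s : ℝ) :
    HasDerivAt (weightedSlice k h f) (weightedSlice k h f' s) s :=
  (hasDerivAt_curry (fun s (τ : unitInterval) => hf s (h * τ)) s).const_mul _

lemma smul_weightedVolterra_weightedSlice {f f' : C(ℝ × ℝ, ℂ)} {s : ℝ}
    (hf : ∀ t, HasDerivAt (fun t => f (s, t)) (f' (s, t)) t) (h0 : f (s, 0) = 0) (k h : ℝ) :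
    ((h : ℂ) • weightedVolterra (k * h)) (weightedSlice k h f' s) = weightedSlice k h f s := by
  rw [smul_apply, weightedSlice, weightedVolterra_expWeight_neg_mul, ← mul_smul_comm,
    smul_volterra_slice hf h0, weightedSlice]

end Slices

section CharacteristicUniqueness

/-- The triangle `T` in the characteristic coordinates `s = x + y`, `t = y - x`. -/
def charTriangle : Set (ℝ × ℝ) := {p | 0 ≤ p.2 ∧ p.2 ≤ p.1 ∧ p.1 ≤ 2 - p.2}

lemma isCompact_charTriangle : IsCompact charTriangle := by
  refine (isCompact_Icc (a := ((0, 0) : ℝ × ℝ)) (b := (2, 1))).of_isClosed_subset ?_ ?_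
  · exact (isClosed_le continuous_const continuous_snd).inter
      ((isClosed_le continuous_snd continuous_fst).inter
      (isClosed_le continuous_fst (continuous_const.sub continuous_snd)))
  · rintro ⟨s, t⟩ ⟨h0, hts, hst⟩
    simp only at h0 hts hst
    exact ⟨⟨h0.trans hts, h0⟩, ⟨by linarith, by linarith⟩⟩

local notation "∂ₛ" => dirDeriv ((1, 0) : ℝ × ℝ)
local notation "∂ₜ" => dirDeriv ((0, 1) : ℝ × ℝ)

lemma hasDerivAt_fst {F : Type*} [NormedAddCommGroup F] [NormedSpace ℝ F] {g : ℝ × ℝ → F}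
    (hg : Differentiable ℝ g) (s t : ℝ) :
    HasDerivAt (fun s => g (s, t)) (∂ₛ g (s, t)) s :=
  hasDerivAt_comp_dirDeriv hg ((hasDerivAt_id s).prodMk (hasDerivAt_const s t))

lemma hasDerivAt_snd {F : Type*} [NormedAddCommGroup F] [NormedSpace ℝ F] {g : ℝ × ℝ → F}
    (hg : Differentiable ℝ g) (s t : ℝ) :
    HasDerivAt (fun t => g (s, t)) (∂ₜ g (s, t)) t :=
  hasDerivAt_comp_dirDeriv hg ((hasDerivAt_const t s).prodMk (hasDerivAt_id t))

lemma dirDeriv_eq_zero_of_eqOn_Ioo {F : Type*} [NormedAddCommGroup F] [NormedSpace ℝ F]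
    {g : ℝ × ℝ → F} (hg : Differentiable ℝ g) {α β t : ℝ} (h : ∀ s ∈ Ioo α β, g (s, t) = 0)
    {s : ℝ} (hs : s ∈ Ioo α β) : ∂ₛ g (s, t) = 0 := by
  refine (hasDerivAt_fst hg s t).unique ((hasDerivAt_const s 0).congr_of_eventuallyEq ?_)
  filter_upwards [isOpen_Ioo.mem_nhds hs] with u hu using h u hu

variable {g : ℝ × ℝ → ℂ} {c : ℂ} {κ : ℝ}

lemma norm_smul_weightedVolterra_le {h : ℝ} (hh : 0 < h) (hκ : 0 < κ) :
    ‖(h : ℂ) • weightedVolterra (κ * h)‖ ≤ 1 / κ := by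
  refine (ContinuousLinearMap.opNorm_smul_le _ _).trans ?_
  rw [Complex.norm_real, Real.norm_of_nonneg hh.le]
  refine (mul_le_mul_of_nonneg_left (norm_weightedVolterra_le (by positivity)) hh.le).trans_eq ?_
  field_simp

lemma mul_mem_Icc_zero {h : ℝ} (hh : 0 ≤ h) (τ : unitInterval) : h * τ ∈ Icc 0 h :=
  ⟨mul_nonneg hh τ.2.1, mul_le_of_le_one_right hh τ.2.2⟩

lemma three_smul_weightedSlice_add_eq_zero {g₀ g₁ g₂ g₃ G₃ : C(ℝ × ℝ, ℂ)} {h s : ℝ} (hh : 0 ≤ h)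
    (hg₁ : ∀ t, HasDerivAt (fun t => g₁ (s, t)) (g₂ (s, t)) t)
    (hg₂ : ∀ t, HasDerivAt (fun t => g₂ (s, t)) (g₃ (s, t)) t) (hz₁ : g₁ (s, 0) = 0)
    (hz₂ : g₂ (s, 0) = 0)
    (heq : ∀ t ∈ Icc 0 h, 3 * g₃ (s, t) + (G₃ (s, t) + g₁ (s, t) + c * g₀ (s, t)) = 0) :
    (3 : ℂ) • weightedSlice κ h g₁ s + ((h : ℂ) • weightedVolterra (κ * h))
      (((h : ℂ) • weightedVolterra (κ * h)) (weightedSlice κ h G₃ s + weightedSlice κ h g₁ s +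
        c • weightedSlice κ h g₀ s)) = 0 := by
  have hslice : weightedSlice κ h G₃ s + weightedSlice κ h g₁ s + c • weightedSlice κ h g₀ s =
      (-3 : ℂ) • weightedSlice κ h g₃ s := by
    ext τ
    simp only [weightedSlice, ContinuousMap.add_apply, ContinuousMap.smul_apply,
      ContinuousMap.mul_apply, slice_apply, smul_eq_mul]
    linear_combination expWeight (-(κ * h)) τ * heq (h * τ) (mul_mem_Icc_zero hh τ)
  rw [hslice, map_smul, map_smul, smul_weightedVolterra_weightedSlice hg₂ hz₂,
    smul_weightedVolterra_weightedSlice hg₁ hz₁]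
  module

-- In the weighted sup norm the bound does not depend on the height `h` of the strip.
lemma exp_mul_norm_dirDeriv_le (hg : ContDiff ℝ 3 g) (hκ : 2 ≤ κ) (hκc : 4 * ‖c‖ ≤ κ)
    {h α β M : ℝ} (hh : 0 < h) (hz₁ : ∀ s ∈ Ioo α β, ∂ₛ g (s, 0) = 0)
    (hz₂ : ∀ s ∈ Ioo α β, ∂ₜ (∂ₛ g) (s, 0) = 0)
    (heq : ∀ s ∈ Ioo α β, ∀ t ∈ Icc 0 h, 3 * ∂ₜ (∂ₜ (∂ₛ g)) (s, t) +
      (∂ₛ (∂ₛ (∂ₛ g)) (s, t) + ∂ₛ g (s, t) + c * g (s, t)) = 0)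
    (hM : ∀ s ∈ Ioo α β, ∀ t ∈ Icc 0 h, Real.exp (-(κ * t)) * ‖g (s, t)‖ ≤ M) :
    ∀ s ∈ Ioo α β, Real.exp (-(κ * h)) * ‖∂ₛ g (s, h)‖ ≤ M / 4 := by
  have hc₁ : ContDiff ℝ 2 (∂ₛ g) := contDiff_dirDeriv hg (by norm_num) _
  have hc₂ (v) : ContDiff ℝ 1 (dirDeriv v (∂ₛ g)) := contDiff_dirDeriv hc₁ (by norm_num) v
  have hc₃ (v) : ContDiff ℝ 0 (dirDeriv v (dirDeriv v (∂ₛ g))) :=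
    contDiff_dirDeriv (hc₂ v) (by norm_num) v
  have hd₁ : Differentiable ℝ (∂ₛ g) := hc₁.differentiable (by norm_num)
  have hd₂ (v) : Differentiable ℝ (dirDeriv v (∂ₛ g)) := (hc₂ v).differentiable (by norm_num)
  let g₀ : C(ℝ × ℝ, ℂ) := ⟨g, hg.continuous⟩
  let g₁ : C(ℝ × ℝ, ℂ) := ⟨∂ₛ g, hc₁.continuous⟩
  let g₂ (v) : C(ℝ × ℝ, ℂ) := ⟨dirDeriv v (∂ₛ g), (hc₂ v).continuous⟩
  let g₃ (v) : C(ℝ × ℝ, ℂ) := ⟨dirDeriv v (dirDeriv v (∂ₛ g)), (hc₃ v).continuous⟩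
  let J := (h : ℂ) • weightedVolterra (κ * h)
  have hsymbol : ∀ s ∈ Ioo α β, (3 : ℂ) • weightedSlice κ h g₁ s + J (J (weightedSlice κ h
      (g₃ (1, 0)) s + weightedSlice κ h g₁ s + c • weightedSlice κ h g₀ s)) = 0 := fun s hs =>
    three_smul_weightedSlice_add_eq_zero (g₂ := g₂ (0, 1)) (g₃ := g₃ (0, 1)) hh.le
      (hasDerivAt_snd hd₁ s) (hasDerivAt_snd (hd₂ _) s) (hz₁ s hs) (hz₂ s hs) (heq s hs)
  have hJ : ‖J‖ ≤ 1 / κ := norm_smul_weightedVolterra_le hh (by linarith)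
  have hJc : ‖J‖ * ‖c‖ ≤ 1 / 4 := (mul_le_mul_of_nonneg_right hJ (norm_nonneg c)).trans (by
    rw [one_div_mul_eq_div, div_le_iff₀] <;> linarith)
  obtain ⟨A, hA, hAg⟩ :=
    ((isCauchyUnique_weightedVolterra (κ * h)).smul hh.ne').exists_deriv_eq
      (hJ.trans (by gcongr)) hJc
      (hasDerivAt_weightedSlice (hasDerivAt_fst (hg.differentiable (by norm_num))) κ h)
      (hasDerivAt_weightedSlice (hasDerivAt_fst hd₁) κ h)
      (hasDerivAt_weightedSlice (f := g₂ (1, 0)) (hasDerivAt_fst (hd₂ _)) κ h) hsymbol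
  intro s hs
  have hM0 : 0 ≤ M := le_trans (by positivity) (hM s hs 0 ⟨le_rfl, hh.le⟩)
  calc Real.exp (-(κ * h)) * ‖∂ₛ g (s, h)‖ = ‖weightedSlice κ h g₁ s 1‖ := by
        rw [norm_weightedSlice_apply, Icc.coe_one, mul_one]
        rfl
    _ ≤ ‖A (weightedSlice κ h g₀ s)‖ := hAg s hs ▸ ContinuousMap.norm_coe_le_norm _ 1
    _ ≤ 1 / 4 * M := by
        refine A.le_of_opNorm_le_of_le hA ((ContinuousMap.norm_le _ hM0).2 fun τ => ?_)
        exact (norm_weightedSlice_apply ..).trans_le (hM s hs _ (mul_mem_Icc_zero hh.le τ))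
    _ = M / 4 := by ring

lemma norm_dirDeriv_le_of_isMaxOn (hg : ContDiff ℝ 3 g) (hκ : 2 ≤ κ) (hκc : 4 * ‖c‖ ≤ κ)
    (heq : ∀ p ∈ charTriangle,
      3 * ∂ₜ (∂ₜ (∂ₛ g)) p + (∂ₛ (∂ₛ (∂ₛ g)) p + ∂ₛ g p + c * g p) = 0)
    (hbase : ∀ s ∈ Icc 0 2, g (s, 0) = 0) (hbase' : ∀ s ∈ Icc 0 2, ∂ₜ g (s, 0) = 0) {u v : ℝ}
    (hmax : IsMaxOn (fun p => Real.exp (-(κ * p.2)) * ‖g p‖) charTriangle (u, v))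
    (hv : 0 < v) (hv1 : v < 1) : ∀ s ∈ Icc v (2 - v), ‖∂ₛ g (s, v)‖ ≤ ‖g (u, v)‖ / 4 := by
  have hd : Differentiable ℝ g := hg.differentiable (by norm_num)
  have hc' (w) : ContDiff ℝ 2 (dirDeriv w g) := contDiff_dirDeriv hg (by norm_num) w
  have hIoo : Ioo v (2 - v) ⊆ Icc 0 2 :=
    Ioo_subset_Icc_self.trans (Icc_subset_Icc hv.le (by linarith))
  have hmem {s t : ℝ} (hs : s ∈ Ioo v (2 - v)) (ht : t ∈ Icc 0 v) : (s, t) ∈ charTriangle :=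
    ⟨ht.1, ht.2.trans hs.1.le, by simp only; linarith [ht.2, hs.2]⟩
  have hbound := exp_mul_norm_dirDeriv_le hg hκ hκc hv
    (fun s hs => dirDeriv_eq_zero_of_eqOn_Ioo hd (fun s hs => hbase s (hIoo hs)) hs)
    (fun s hs => by
      rw [dirDeriv_comm (hg.of_le (by norm_num))]
      exact dirDeriv_eq_zero_of_eqOn_Ioo ((hc' _).differentiable (by norm_num))
        (fun s hs => hbase' s (hIoo hs)) hs)
    (fun s hs t ht => heq _ (hmem hs ht)) (fun s hs t ht => hmax (hmem hs ht))
  rw [← closure_Ioo (by linarith : v < 2 - v).ne]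
  refine fun s hs => le_on_closure (f := fun s => ‖∂ₛ g (s, v)‖) (fun s hs => ?_) ?_
    continuousOn_const hs
  · refine le_of_mul_le_mul_left ?_ (Real.exp_pos (-(κ * v)))
    rw [mul_div_assoc']
    exact hbound s hs
  · exact ((hc' _).continuous.comp (by fun_prop)).norm.continuousOn

-- At a maximum `(u, v)` of the weighted norm, the bound for `∂ₛ g` and the mean value inequality on
-- a segment of length at most `2`, starting on the side `s = t`, give `‖g‖ ≤ ‖g‖ / 2`.
lemma eqOn_zero_charTriangle (hg : ContDiff ℝ 3 g)
    (heq : ∀ p ∈ charTriangle,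
      3 * ∂ₜ (∂ₜ (∂ₛ g)) p + (∂ₛ (∂ₛ (∂ₛ g)) p + ∂ₛ g p + c * g p) = 0)
    (hbase : ∀ s ∈ Icc 0 2, g (s, 0) = 0) (hbase' : ∀ s ∈ Icc 0 2, ∂ₜ g (s, 0) = 0)
    (hside : ∀ t ∈ Icc 0 1, g (t, t) = 0) : EqOn g 0 charTriangle := by
  let κ : ℝ := 2 + 4 * ‖c‖
  let N (p : ℝ × ℝ) : ℝ := Real.exp (-(κ * p.2)) * ‖g p‖
  have hN : Continuous N :=
    (by fun_prop : Continuous fun p : ℝ × ℝ => Real.exp (-(κ * p.2))).mul hg.continuous.norm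
  intro p hp
  obtain ⟨⟨u, v⟩, ⟨hv, hvu, huv⟩, hmax⟩ :=
    isCompact_charTriangle.exists_isMaxOn ⟨p, hp⟩ hN.continuousOn
  simp only at hv hvu huv
  suffices hguv : g (u, v) = 0 by
    have hNp : N p ≤ N (u, v) := hmax hp
    simp only [N, hguv, norm_zero, mul_zero] at hNp
    exact norm_le_zero_iff.1 (nonpos_of_mul_nonpos_right hNp (Real.exp_pos _))
  rcases hv.eq_or_lt with rfl | hv
  · exact hbase u ⟨hvu, by linarith⟩
  rcases hvu.eq_or_lt with rfl | hvu
  · exact hside v ⟨hv.le, by linarith⟩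
  have hle := norm_dirDeriv_le_of_isMaxOn hg (le_add_of_nonneg_right (by positivity))
    (le_add_of_nonneg_left zero_le_two) heq hbase hbase' hmax hv (by linarith)
  have hmvt := norm_image_sub_le_of_norm_deriv_le_segment' (f := fun s => g (s, v))
    (fun s _ => (hasDerivAt_fst (hg.differentiable (by norm_num)) s v).hasDerivWithinAt)
    (fun s hs => hle s ⟨hs.1, hs.2.le.trans huv⟩) u (right_mem_Icc.2 hvu.le)
  rw [hside v ⟨hv.le, by linarith⟩, sub_zero] at hmvt
  have : ‖g (u, v)‖ / 4 * (u - v) ≤ ‖g (u, v)‖ / 4 * 2 := by gcongr; linarith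
  exact norm_le_zero_iff.1 (by linarith [norm_nonneg (g (u, v))])

/-- The coordinates `x`, `y` as functions of the characteristic coordinates `s = x + y`,
`t = y - x`. -/
def charCoord : ℝ × ℝ →L[ℝ] ℝ × ℝ :=
  ((2⁻¹ : ℝ) • (ContinuousLinearMap.fst ℝ ℝ ℝ - ContinuousLinearMap.snd ℝ ℝ ℝ)).prod
    ((2⁻¹ : ℝ) • (ContinuousLinearMap.fst ℝ ℝ ℝ + ContinuousLinearMap.snd ℝ ℝ ℝ))

lemma charCoord_apply (s t : ℝ) : charCoord (s, t) = (2⁻¹ * (s - t), 2⁻¹ * (s + t)) := rfl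

lemma charCoord_add_sub (x y : ℝ) : charCoord (x + y, y - x) = (x, y) := by
  rw [charCoord_apply]
  ring_nf

lemma charCoord_mem_T {p : ℝ × ℝ} (hp : p ∈ charTriangle) : charCoord p ∈ T := by
  obtain ⟨s, t⟩ := p
  obtain ⟨h0, hts, hst⟩ := hp
  simp only at h0 hts hst
  rw [charCoord_apply]
  exact ⟨by simp only; linarith, by simp only; linarith, by simp only; linarith⟩

lemma add_sub_mem_charTriangle {x y : ℝ} (h : (x, y) ∈ T) : (x + y, y - x) ∈ charTriangle := by
  obtain ⟨hx, hxy, hy⟩ := h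
  simp only at hx hxy hy
  exact ⟨by simp only; linarith, by simp only; linarith, by simp only; linarith⟩

variable {q : ℝ × ℝ → ℝ}

lemma char_operator_comp_charCoord (hq : ContDiff ℝ 3 q) (p : ℝ × ℝ) :
    3 * ∂ₜ (∂ₜ (∂ₛ (Complex.ofRealCLM ∘ q ∘ charCoord))) p +
      (∂ₛ (∂ₛ (∂ₛ (Complex.ofRealCLM ∘ q ∘ charCoord))) p +
        ∂ₛ (Complex.ofRealCLM ∘ q ∘ charCoord) p) =
      kernelOperator (1, 0) (0, 1) q (charCoord p) / 2 := by
  have hc₁ (v) : ContDiff ℝ 2 (dirDeriv v q) := contDiff_dirDeriv hq (by norm_num) v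
  have hd₁ (v) : Differentiable ℝ (dirDeriv v q) := (hc₁ v).differentiable (by norm_num)
  have hd₂ (v w) : Differentiable ℝ (dirDeriv v (dirDeriv w q)) :=
    (contDiff_dirDeriv (hc₁ w) (m := 1) (by norm_num) v).differentiable (by norm_num)
  have hx : ((1, 0) : ℝ × ℝ) = charCoord (1, 0) - charCoord (0, 1) := by
    rw [charCoord_apply, charCoord_apply]
    norm_num
  have hy : ((0, 1) : ℝ × ℝ) = charCoord (1, 0) + charCoord (0, 1) := by
    rw [charCoord_apply, charCoord_apply]
    norm_num
  have hop : kernelOperator (1, 0) (0, 1) q = _ :=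
    (congrArg₂ (kernelOperator · · q) hx hy).trans (kernelOperator_sub_add hq _ _)
  simp only [dirDeriv_comp (hq.differentiable (by norm_num)), dirDeriv_comp (hd₁ _),
    dirDeriv_comp (hd₂ _ _), hop, Function.comp_apply, Pi.add_apply, Pi.smul_apply, smul_eq_mul,
    Complex.ofRealCLM_apply]
  push_cast
  ring

lemma dirDeriv_snd_comp_charCoord_eq_zero (hq : Differentiable ℝ q)
    (hdiag : ∀ x ∈ Icc 0 1, q (x, x) = 0)
    (hdiag' : ∀ x ∈ Icc 0 1, dirDeriv (1, 0) q (x, x) = 0) :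
    ∀ s ∈ Icc 0 2, ∂ₜ (Complex.ofRealCLM ∘ q ∘ charCoord) (s, 0) = 0 := by
  intro s hs
  have hx : 2⁻¹ * s ∈ Icc (0 : ℝ) 1 := ⟨by linarith [hs.1], by linarith [hs.2]⟩
  have htangent : dirDeriv (1, 1) q (2⁻¹ * s, 2⁻¹ * s) = 0 :=
    (uniqueDiffOn_Icc zero_lt_one _ hx).eq_deriv _
      (hasDerivAt_comp_dirDeriv hq ((hasDerivAt_id _).prodMk (hasDerivAt_id _))).hasDerivWithinAt
      ((hasDerivWithinAt_const _ _ 0).congr hdiag (hdiag _ hx))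
  have hdir : charCoord (0, 1) = (2⁻¹ : ℝ) • (1, 1) - (1, 0) := by
    rw [charCoord_apply]
    norm_num
  rw [dirDeriv_comp hq, hdir, dirDeriv_dir_sub, Function.comp_apply, Function.comp_apply,
    charCoord_apply, sub_zero, add_zero, Pi.sub_apply, hdiag' _ hx, dirDeriv, map_smul]
  exact (congrArg (fun x : ℝ => ((2⁻¹ * x - 0 : ℝ) : ℂ)) htangent).trans (by simp)

lemma eqOn_zero_T {lam : ℝ} (hq : ContDiff ℝ 3 q)
    (heq : ∀ p ∈ T, kernelOperator (1, 0) (0, 1) q p = -lam * q p)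
    (hdiag : ∀ x ∈ Icc 0 1, q (x, x) = 0)
    (hdiag' : ∀ x ∈ Icc 0 1, dirDeriv (1, 0) q (x, x) = 0)
    (hside : ∀ y ∈ Icc 0 1, q (0, y) = 0) : EqOn q 0 T := by
  have hzero : EqOn (Complex.ofRealCLM ∘ q ∘ charCoord) 0 charTriangle := by
    refine eqOn_zero_charTriangle (c := lam / 2)
      (Complex.ofRealCLM.contDiff.comp (hq.comp charCoord.contDiff)) (fun p hp => ?_)
      (fun s hs => ?_)
      (dirDeriv_snd_comp_charCoord_eq_zero (hq.differentiable (by norm_num)) hdiag hdiag')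
      (fun t ht => ?_)
    · rw [← add_assoc, char_operator_comp_charCoord hq, heq _ (charCoord_mem_T hp),
        Function.comp_apply, Function.comp_apply, Complex.ofRealCLM_apply]
      push_cast
      ring
    · rw [Function.comp_apply, Function.comp_apply, charCoord_apply, sub_zero, add_zero,
        hdiag _ ⟨by linarith [hs.1], by linarith [hs.2]⟩, map_zero]
    · have : charCoord (t, t) = (0, t) := by
        rw [charCoord_apply]
        ring_nf
      rw [Function.comp_apply, Function.comp_apply, this, hside t ht, map_zero]
  rintro ⟨x, y⟩ hxy
  have := hzero (add_sub_mem_charTriangle hxy)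
  rw [Function.comp_apply, Function.comp_apply, charCoord_add_sub] at this
  exact Complex.ofReal_eq_zero.1 this

lemma IsInverseObserverKernel.eqOn_T {lam : ℝ} {r r' : ℝ → ℝ → ℝ}
    (hr : IsInverseObserverKernel lam r) (hr' : IsInverseObserverKernel lam r') :
    EqOn (Function.uncurry r) (Function.uncurry r') T := by
  obtain ⟨hc, heq, hdiag, hdiag', hside⟩ := hr
  obtain ⟨hc', heq', hDiag, hDiag', hside'⟩ := hr'
  have hd := hc.differentiable (by norm_num)
  have hd' := hc'.differentiable (by norm_num)
  have hzero := eqOn_zero_T (lam := lam) (q := Function.uncurry r - Function.uncurry r')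
    (hc.sub hc') (fun p hp => ?_) (fun x hx => ?_) (fun x hx => ?_) (fun y hy => ?_)
  · exact fun p hp => sub_eq_zero.1 (hzero hp)
  · rw [kernelOperator_sub hc hc', Pi.sub_apply, ← pd_cubes_eq_kernelOperator hc,
      ← pd_cubes_eq_kernelOperator hc', heq _ _ hp, heq' _ _ hp]
    exact (mul_sub ..).symm
  · exact sub_eq_zero.2 ((hdiag x hx).trans (hDiag x hx).symm)
  · rw [dirDeriv_sub hd hd', ← uncurry_pdx hd, ← uncurry_pdx hd']
    exact sub_eq_zero.2 ((hdiag' x hx).trans (hDiag' x hx).symm)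
  · exact sub_eq_zero.2 ((hside y hy).trans (hside' y hy).symm)

end CharacteristicUniqueness

section expFunction

variable {A : Type*} [NormedCommRing A] [NormedAlgebra ℝ A] [CompleteSpace A]

/-- The function `(x, y) ↦ L (exp (x Q + y P))`. -/
def expFunction (Q P : A) (L : A →L[ℝ] ℝ) (x y : ℝ) : ℝ := L (NormedSpace.exp (x • Q + y • P))

lemma contDiff_expFunction (Q P : A) (L : A →L[ℝ] ℝ) {n : WithTop ℕ∞} :
    ContDiff ℝ n (Function.uncurry (expFunction Q P L)) := by
  have h : ContDiff ℝ n (NormedSpace.exp : A → A) :=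
    contDiff_iff_contDiffAt.2 fun x => (NormedSpace.exp_analytic x).contDiffAt
  exact L.contDiff.comp (h.comp (by fun_prop))

lemma pdx_expFunction (Q P : A) (L : A →L[ℝ] ℝ) :
    pdx (expFunction Q P L) = expFunction Q P (L ∘L ContinuousLinearMap.mul ℝ A Q) := by
  let _ : NormedAlgebra ℚ A := .restrictScalars ℚ ℝ A
  funext x y
  have h := (hasDerivAt_exp_smul_const' (𝕂 := ℝ) Q x).mul_const (NormedSpace.exp (y • P))
  have h' := (L.hasFDerivAt.comp_hasDerivAt x h).deriv
  simp only [pdx, expFunction, NormedSpace.exp_add]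
  exact h'.trans (by simp [mul_assoc])

lemma pdy_expFunction (Q P : A) (L : A →L[ℝ] ℝ) :
    pdy (expFunction Q P L) = expFunction Q P (L ∘L ContinuousLinearMap.mul ℝ A P) := by
  let _ : NormedAlgebra ℚ A := .restrictScalars ℚ ℝ A
  funext x y
  have h := (hasDerivAt_exp_smul_const' (𝕂 := ℝ) P y).const_mul (NormedSpace.exp (x • Q))
  have h' := (L.hasFDerivAt.comp_hasDerivAt y h).deriv
  simp only [pdy, expFunction, NormedSpace.exp_add]
  exact h'.trans (by simp [mul_left_comm])

lemma expFunction_eqn {Q P : A} {lam : ℝ} (h : Q ^ 3 + P ^ 3 + Q + P = algebraMap ℝ A (-lam))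
    (L : A →L[ℝ] ℝ) (x y : ℝ) :
    pdx (pdx (pdx (expFunction Q P L))) x y + pdy (pdy (pdy (expFunction Q P L))) x y +
      pdx (expFunction Q P L) x y + pdy (expFunction Q P L) x y = -lam * expFunction Q P L x y := by
  simp only [pdx_expFunction, pdy_expFunction]
  simp only [expFunction, ContinuousLinearMap.comp_apply, ContinuousLinearMap.mul_apply',
    ← map_add]
  rw [← smul_eq_mul (-lam), ← map_smul, Algebra.smul_def (-lam) (NormedSpace.exp _), ← h]
  congr 1
  ring

end expFunction

section CircleIntegrals

open Metric

lemma exists_analyticOnNhd_root (c : ℂ) : ∃ ρ > 0, ∃ a : ℂ → ℂ,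
    AnalyticOnNhd ℂ a (closedBall 0 ρ) ∧
      ∀ z ∈ closedBall 0 ρ, 3 * a z + z ^ 2 * a z + z ^ 6 * a z ^ 3 + c = 0 := by
  let f (p : ℂ × ℂ) : ℂ := 3 * p.2 + p.1 ^ 2 * p.2 + p.1 ^ 6 * p.2 ^ 3 + c
  have hf : ContDiff ℂ ⊤ f := by fun_prop
  have hω : (⊤ : WithTop ℕ∞) ≠ 0 := by simp
  have hpartial : fderiv ℂ f (0, -c / 3) ∘L .inr ℂ ℂ ℂ =
      ContinuousLinearEquiv.unitsEquivAut ℂ (Units.mk0 3 (by norm_num)) := by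
    have hchain := (hf.differentiable hω (0, -c / 3)).hasFDerivAt.comp_hasDerivAt (-c / 3)
      ((hasDerivAt_const _ 0).prodMk (hasDerivAt_id _))
    have hline : HasDerivAt (fun b => f (0, b)) 3 (-c / 3) := by
      simpa [f] using (hasDerivAt_id (-c / 3)).const_mul 3
    ext
    simpa using hchain.unique hline
  have hf0 : f (0, -c / 3) = 0 := by
    simp only [f]
    ring
  have hinv := hpartial ▸ ContinuousLinearMap.isInvertible_equiv
  let a := hf.contDiffAt.implicitFunction hω hinv
  have ha : ContDiffAt ℂ ⊤ a 0 := hf.contDiffAt.contDiffAt_implicitFunction hω hinv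
  have hroot : ∀ᶠ z in 𝓝 0, f (z, a z) = 0 := by
    simpa only [hf0] using hf.contDiffAt.eventually_apply_implicitFunction hω hinv
  obtain ⟨ρ, hρ, h⟩ := nhds_basis_closedBall.eventually_iff.1
    (ha.analyticAt.eventually_analyticAt.and hroot)
  exact ⟨ρ, hρ, a, fun z hz => (h hz).1, fun z hz => (h hz).2⟩

variable {ρ : ℝ} {a : ℂ → ℂ}

lemma hasDerivAt_sq_mul {z : ℂ} (ha : DifferentiableAt ℂ a z) :
    HasDerivAt (fun z => z ^ 2 * a z) (z * (2 * a z + z * deriv a z)) z :=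
  ((hasDerivAt_pow 2 z).mul ha.hasDerivAt).congr_deriv (by simp; ring)

lemma hasDerivAt_sq_mul_add_inv {z : ℂ} (ha : DifferentiableAt ℂ a z) (hz : z ≠ 0) :
    HasDerivAt (fun z => z ^ 2 * a z + z⁻¹) (z * (2 * a z + z * deriv a z) - (z ^ 2)⁻¹) z :=
  (hasDerivAt_sq_mul ha).add (hasDerivAt_inv hz)

lemma hasDerivAt_exp_sq_mul {z : ℂ} (ha : DifferentiableAt ℂ a z) (x : ℂ) :
    HasDerivAt (fun z => Complex.exp (x * (z ^ 2 * a z)))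
      (z * (x * (2 * a z + z * deriv a z) * Complex.exp (x * (z ^ 2 * a z)))) z :=
  ((hasDerivAt_sq_mul ha).const_mul x).cexp.congr_deriv (by ring)

lemma circleIntegral_deriv_mul_exp {P P' : ℂ → ℂ} (hρ : 0 ≤ ρ)
    (hP : ∀ z ∈ sphere 0 ρ, HasDerivAt P (P' z) z) (y : ℂ) :
    (∮ z in C(0, ρ), P' z * Complex.exp (y * P z)) = 0 := by
  rcases eq_or_ne y 0 with rfl | hy
  · simp only [zero_mul, Complex.exp_zero, mul_one]
    exact circleIntegral.integral_eq_zero_of_hasDerivWithinAt hρ fun z hz =>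
      (hP z hz).hasDerivWithinAt
  · refine circleIntegral.integral_eq_zero_of_hasDerivWithinAt
      (f := fun z => Complex.exp (y * P z) / y) hρ fun z hz => ?_
    refine ((((hP z hz).const_mul y).cexp.div_const y).congr_deriv ?_).hasDerivWithinAt
    field_simp

lemma circleIntegral_add_inv_pow_mul {f g : ℂ → ℂ} (hρ : 0 < ρ)
    (hf : AnalyticOnNhd ℂ f (closedBall 0 ρ)) (hg : AnalyticOnNhd ℂ g (closedBall 0 ρ)) (n : ℕ) :
    (∮ z in C(0, ρ), (f z + (z ^ (n + 1))⁻¹ * g z)) =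
      2 * Real.pi * Complex.I / n.factorial * iteratedDeriv n g 0 := by
  have hf0 : (∮ z in C(0, ρ), f z) = 0 := (hf.differentiableOn.mono
    closure_ball_subset_closedBall).diffContOnCl.circleIntegral_eq_zero hρ.le
  have hcauchy := hg.differentiableOn.circleIntegral_one_div_sub_center_pow_smul hρ n
  simp only [sub_zero, one_div, smul_eq_mul] at hcauchy
  have hpole : ContinuousOn (fun z : ℂ => (z ^ (n + 1))⁻¹) (sphere 0 ρ) :=
    (continuousOn_id.pow _).inv₀ fun z hz => pow_ne_zero _ (ne_zero_of_mem_sphere hρ.ne' ⟨z, hz⟩)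
  have hfc := hf.continuousOn.mono sphere_subset_closedBall
  have hgc := hg.continuousOn.mono sphere_subset_closedBall
  rw [circleIntegral.integral_add (hfc.circleIntegrable hρ.le)
    ((hpole.fun_mul hgc).circleIntegrable hρ.le), hf0, zero_add, hcauchy]

lemma iteratedDeriv_two_exp_sq_mul_zero (ha : AnalyticAt ℂ a 0) (x : ℂ) :
    iteratedDeriv 2 (fun z => Complex.exp (x * (z ^ 2 * a z))) 0 = 2 * x * a 0 := by
  have hfirst : deriv (fun z => Complex.exp (x * (z ^ 2 * a z))) =ᶠ[𝓝 0]
      fun z => z * (x * (2 * a z + z * deriv a z) * Complex.exp (x * (z ^ 2 * a z))) := by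
    filter_upwards [ha.eventually_analyticAt] with z hz
    exact (hasDerivAt_exp_sq_mul hz.differentiableAt x).deriv
  have hfactor : DifferentiableAt ℂ (fun z => x * (2 * a z + z * deriv a z) *
      Complex.exp (x * (z ^ 2 * a z))) 0 := by
    have := ha.deriv
    fun_prop
  rw [iteratedDeriv_succ, iteratedDeriv_one, hfirst.deriv_eq,
    ((hasDerivAt_id' 0).fun_mul hfactor.hasDerivAt).deriv]
  simp
  ring

lemma circleIntegral_deriv_mul_exp_sq_mul (hρ : 0 < ρ)
    (ha : AnalyticOnNhd ℂ a (closedBall 0 ρ)) (x : ℂ) :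
    (∮ z in C(0, ρ), (z * (2 * a z + z * deriv a z) - (z ^ 2)⁻¹) *
      Complex.exp (x * (z ^ 2 * a z))) = 0 := by
  have hresidue := circleIntegral_add_inv_pow_mul (f := fun z => z * (2 * a z + z * deriv a z) *
    Complex.exp (x * (z ^ 2 * a z))) (g := fun z => -Complex.exp (x * (z ^ 2 * a z))) hρ
    (fun z hz => by have := ha z hz; have := this.deriv; fun_prop)
    (fun z hz => by have := ha z hz; fun_prop) 1
  have hderiv := hasDerivAt_exp_sq_mul (ha 0 (mem_closedBall_self hρ.le)).differentiableAt x
  rw [iteratedDeriv_one, hderiv.fun_neg.deriv, zero_mul, neg_zero, mul_zero] at hresidue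
  rw [← hresidue]
  congr! 2 with z
  ring

lemma circleIntegral_deriv_mul_sq_mul_sub_inv_mul_exp_sq_mul (hρ : 0 < ρ)
    (ha : AnalyticOnNhd ℂ a (closedBall 0 ρ)) (x : ℂ) :
    (∮ z in C(0, ρ), (z * (2 * a z + z * deriv a z) - (z ^ 2)⁻¹) *
      ((z ^ 2 * a z - z⁻¹) * Complex.exp (x * (z ^ 2 * a z)))) =
      2 * Real.pi * Complex.I * (x * a 0) := by
  have hresidue := circleIntegral_add_inv_pow_mul (f := fun z =>
    ((z ^ 3 * a z - 1) * (2 * a z + z * deriv a z) - a z) * Complex.exp (x * (z ^ 2 * a z)))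
    (g := fun z => Complex.exp (x * (z ^ 2 * a z))) hρ
    (fun z hz => by have := ha z hz; have := this.deriv; fun_prop)
    (fun z hz => by have := ha z hz; fun_prop) 2
  rw [iteratedDeriv_two_exp_sq_mul_zero (ha 0 (mem_closedBall_self hρ.le))] at hresidue
  rw [circleIntegral.integral_congr hρ.le fun z hz => ?_, hresidue]
  · norm_num
    ring
  · have hz0 : z ≠ 0 := ne_zero_of_mem_sphere hρ.ne' ⟨z, hz⟩
    field_simp
    ring

end CircleIntegrals

section ExistenceOfKernel

open Metric

lemma continuousMap_exp_apply {X : Type*} [TopologicalSpace X] [CompactSpace X] (F : C(X, ℂ))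
    (z : X) : NormedSpace.exp F z = Complex.exp (F z) := by
  let _ : NormedAlgebra ℚ C(X, ℂ) := .restrictScalars ℚ ℂ _
  rw [Complex.exp_eq_exp_ℂ]
  exact NormedSpace.map_exp (ContinuousMap.evalAlgHom ℂ ℂ z) (continuous_eval_const z) F

variable {ρ : ℝ}

/-- Integration over the circle `|z| = ρ` of continuous functions on it. -/
def circleIntegralCLM (hρ : 0 ≤ ρ) : C(sphere (0 : ℂ) ρ, ℂ) →L[ℂ] ℂ :=
  let γ (θ : ℝ) : sphere (0 : ℂ) ρ := ⟨circleMap 0 ρ θ, circleMap_mem_sphere 0 hρ θ⟩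
  have hγ : Continuous γ := (continuous_circleMap 0 ρ).subtype_mk _
  have hint (F : C(sphere (0 : ℂ) ρ, ℂ)) : IntervalIntegrable
      (fun θ => deriv (circleMap 0 ρ) θ • F (γ θ)) volume 0 (2 * Real.pi) := by
    simp only [deriv_circleMap]
    exact (((continuous_circleMap 0 ρ).mul continuous_const).smul
      (F.continuous.comp hγ)).intervalIntegrable _ _
  LinearMap.mkContinuous
    { toFun := fun F => ∫ θ in (0 : ℝ)..2 * Real.pi, deriv (circleMap 0 ρ) θ • F (γ θ)
      map_add' := fun F G => by
        simp only [ContinuousMap.add_apply, smul_add]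
        exact intervalIntegral.integral_add (hint F) (hint G)
      map_smul' := fun c F => by
        simp only [ContinuousMap.smul_apply, smul_comm _ c]
        exact intervalIntegral.integral_smul c _ }
    (ρ * |2 * Real.pi - 0|) fun F => by
      rw [mul_right_comm]
      refine intervalIntegral.norm_integral_le_of_norm_le_const fun θ _ => ?_
      rw [norm_smul, deriv_circleMap, norm_mul, norm_circleMap_zero, Complex.norm_I, mul_one,
        abs_of_nonneg hρ]
      exact mul_le_mul_of_nonneg_left (F.norm_coe_le_norm _) hρ

lemma circleIntegralCLM_apply (hρ : 0 ≤ ρ) {F : C(sphere (0 : ℂ) ρ, ℂ)} {f : ℂ → ℂ}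
    (hF : ∀ z, F z = f z) : circleIntegralCLM hρ F = ∮ z in C(0, ρ), f z :=
  intervalIntegral.integral_congr fun θ _ => congrArg (deriv (circleMap 0 ρ) θ • ·) (hF _)

/-- The functional `F ↦ -Re ((2πi)⁻¹ ∮ W F)` on continuous functions on the circle `|z| = ρ`. -/
def circleFunctional (hρ : 0 ≤ ρ) (W : C(sphere (0 : ℂ) ρ, ℂ)) : C(sphere (0 : ℂ) ρ, ℂ) →L[ℝ] ℝ :=
  Complex.reCLM ∘L ((-(2 * Real.pi * Complex.I)⁻¹ •
    (circleIntegralCLM hρ ∘L ContinuousLinearMap.mul ℂ _ W)).restrictScalars ℝ)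

lemma circleFunctional_apply (hρ : 0 ≤ ρ) {W F : C(sphere (0 : ℂ) ρ, ℂ)} {w f : ℂ → ℂ}
    (hW : ∀ z, W z = w z) (hF : ∀ z, F z = f z) : circleFunctional hρ W F =
      (-(2 * Real.pi * Complex.I)⁻¹ * ∮ z in C(0, ρ), w z * f z).re := by
  rw [← circleIntegralCLM_apply hρ (F := W * F) fun z => by
    rw [ContinuousMap.mul_apply, hW, hF]]
  rfl

variable {P Q W : C(sphere (0 : ℂ) ρ, ℂ)} {p q w : ℂ → ℂ}

lemma expFunction_circleFunctional (hρ : 0 ≤ ρ) (hP : ∀ z, P z = p z) (hQ : ∀ z, Q z = q z)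
    (hW : ∀ z, W z = w z) (x y : ℝ) : expFunction Q P (circleFunctional hρ W) x y =
      (-(2 * Real.pi * Complex.I)⁻¹ *
        ∮ z in C(0, ρ), w z * Complex.exp (x * q z + y * p z)).re := by
  refine circleFunctional_apply hρ hW fun z => ?_
  simp only [continuousMap_exp_apply, ContinuousMap.add_apply, ContinuousMap.smul_apply,
    Complex.real_smul, hP, hQ]

lemma pdx_expFunction_circleFunctional (hρ : 0 ≤ ρ) (hP : ∀ z, P z = p z) (hQ : ∀ z, Q z = q z)
    (hW : ∀ z, W z = w z) (x y : ℝ) : pdx (expFunction Q P (circleFunctional hρ W)) x y =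
      (-(2 * Real.pi * Complex.I)⁻¹ *
        ∮ z in C(0, ρ), w z * (q z * Complex.exp (x * q z + y * p z))).re := by
  rw [pdx_expFunction, expFunction, ContinuousLinearMap.comp_apply]
  refine circleFunctional_apply hρ hW fun z => ?_
  simp only [ContinuousLinearMap.mul_apply', ContinuousMap.mul_apply, continuousMap_exp_apply,
    ContinuousMap.add_apply, ContinuousMap.smul_apply, Complex.real_smul, hP, hQ]

lemma cube_add_cube_add_of_root {z b c : ℂ} (hz : z ≠ 0)
    (hb : 3 * b + z ^ 2 * b + z ^ 6 * b ^ 3 + c = 0) :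
    (z ^ 2 * b - z⁻¹) ^ 3 + (z ^ 2 * b + z⁻¹) ^ 3 + (z ^ 2 * b - z⁻¹) + (z ^ 2 * b + z⁻¹) =
      -(2 * c) := by
  linear_combination (norm := (field_simp; ring)) 2 * hb

lemma isInverseObserverKernel_expFunction {lam : ℝ} {a : ℂ → ℂ} (hρ : 0 < ρ)
    (ha : AnalyticOnNhd ℂ a (closedBall 0 ρ))
    (hroot : ∀ z ∈ closedBall 0 ρ, 3 * a z + z ^ 2 * a z + z ^ 6 * a z ^ 3 + lam / 2 = 0)
    (hP : ∀ z : sphere (0 : ℂ) ρ, P z = z ^ 2 * a z + (z : ℂ)⁻¹)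
    (hQ : ∀ z : sphere (0 : ℂ) ρ, Q z = z ^ 2 * a z - (z : ℂ)⁻¹)
    (hW : ∀ z : sphere (0 : ℂ) ρ, W z = z * (2 * a z + z * deriv a z) - ((z : ℂ) ^ 2)⁻¹) :
    IsInverseObserverKernel lam (expFunction Q P (circleFunctional hρ.le W)) := by
  have hz0 (z : sphere (0 : ℂ) ρ) : (z : ℂ) ≠ 0 := ne_zero_of_mem_sphere hρ.ne' z
  have ha0 : a 0 = -(lam / 6) := by linear_combination hroot 0 (mem_closedBall_self hρ.le) / 3
  have hsymbol : Q ^ 3 + P ^ 3 + Q + P = algebraMap ℝ _ (-lam) := by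
    ext z
    simp only [ContinuousMap.add_apply, ContinuousMap.pow_apply, hP, hQ]
    rw [cube_add_cube_add_of_root (hz0 z) (hroot z (sphere_subset_closedBall z.2)),
      algebraMap_apply, Complex.real_smul, mul_one]
    push_cast
    ring
  have hformula := expFunction_circleFunctional (p := fun z => z ^ 2 * a z + z⁻¹)
    (q := fun z => z ^ 2 * a z - z⁻¹) (w := fun z => z * (2 * a z + z * deriv a z) - (z ^ 2)⁻¹)
    hρ.le hP hQ hW
  have hformula' := pdx_expFunction_circleFunctional (p := fun z => z ^ 2 * a z + z⁻¹)
    (q := fun z => z ^ 2 * a z - z⁻¹) (w := fun z => z * (2 * a z + z * deriv a z) - (z ^ 2)⁻¹)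
    hρ.le hP hQ hW
  have hdiag (x : ℝ) (z : ℂ) : x * (z ^ 2 * a z - z⁻¹) + x * (z ^ 2 * a z + z⁻¹) =
      (2 * x) * (z ^ 2 * a z) := by ring
  refine ⟨contDiff_expFunction Q P _, fun x y _ => expFunction_eqn hsymbol _ x y,
    fun x _ => ?_, fun x _ => ?_, fun y _ => ?_⟩
  · simp only [hformula, hdiag, circleIntegral_deriv_mul_exp_sq_mul hρ ha, mul_zero,
      Complex.zero_re]
  · simp only [hformula', hdiag, circleIntegral_deriv_mul_sq_mul_sub_inv_mul_exp_sq_mul hρ ha,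
      neg_mul, inv_mul_cancel_left₀ Complex.two_pi_I_ne_zero, ha0]
    have hvalue : -(2 * (x : ℂ) * -(lam / 6)) = (lam / 3 * x : ℝ) := by
      push_cast
      ring
    rw [hvalue, Complex.ofReal_re]
  · simp only [hformula, Complex.ofReal_zero, zero_mul, zero_add]
    rw [circleIntegral_deriv_mul_exp hρ.le fun z hz => hasDerivAt_sq_mul_add_inv
      (ha z (sphere_subset_closedBall hz)).differentiableAt (hz0 ⟨z, hz⟩), mul_zero,
      Complex.zero_re]

lemma exists_isInverseObserverKernel (lam : ℝ) : ∃ r, IsInverseObserverKernel lam r := by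
  obtain ⟨ρ, hρ, a, ha, hroot⟩ := exists_analyticOnNhd_root (lam / 2)
  have hac := ha.continuousOn.mono sphere_subset_closedBall
  have hac' := ha.deriv.continuousOn.mono sphere_subset_closedBall
  have hinv : ContinuousOn (fun z : ℂ => z⁻¹) (sphere 0 ρ) :=
    continuousOn_id.inv₀ fun z hz => ne_zero_of_mem_sphere hρ.ne' ⟨z, hz⟩
  have hw : ContinuousOn (fun z => z * (2 * a z + z * deriv a z) - (z ^ 2)⁻¹) (sphere 0 ρ) := by
    simp only [← inv_pow]
    fun_prop
  have hp : ContinuousOn (fun z => z ^ 2 * a z + z⁻¹) (sphere 0 ρ) := by fun_prop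
  have hq : ContinuousOn (fun z => z ^ 2 * a z - z⁻¹) (sphere 0 ρ) := by fun_prop
  exact ⟨_, isInverseObserverKernel_expFunction (P := ⟨_, hp.domRestrict⟩)
    (Q := ⟨_, hq.domRestrict⟩) (W := ⟨_, hw.domRestrict⟩) hρ ha hroot
    (fun _ => rfl) (fun _ => rfl) fun _ => rfl⟩

end ExistenceOfKernel

theorem inverse_observer_kernel_exists_unique_general (lam : ℝ) :
    ∃ r : ℝ → ℝ → ℝ, IsInverseObserverKernel lam r ∧
      ∀ r' : ℝ → ℝ → ℝ, IsInverseObserverKernel lam r' →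
        ∀ x y : ℝ, (x, y) ∈ T → r' x y = r x y := by
  obtain ⟨r, hr⟩ := exists_isInverseObserverKernel lam
  exact ⟨r, hr, fun _ hr' _ _ hxy => hr'.eqOn_T hr hxy⟩

/-- Existence and uniqueness (as a function on `T`) of the inverse observer kernel. -/
theorem inverse_observer_kernel_exists_unique (lam : ℝ) (hlam : 0 < lam) :
    ∃ r : ℝ → ℝ → ℝ, IsInverseObserverKernel lam r ∧
      ∀ r' : ℝ → ℝ → ℝ, IsInverseObserverKernel lam r' →
        ∀ x y : ℝ, (x, y) ∈ T → r' x y = r x y := by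
  exact inverse_observer_kernel_exists_unique_general lam
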